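/- Let β > 1, L > 0, d ≥ 1, and ℓ = ⌊β⌋ ≥ 1. There exists a constant c > 0 depending only on β, d, and L such that the following holds. Let m be a positive integer and set h = 1/m. For j ∈ {0, …, m−1}^d let P_ℓ^j = {h·(x + j) : x ∈ P_ℓ} denote the rescaled and shifted copy of the ℓ-th principal lattice in the sub-cube I_j = [0,h]^d + h·j. If f, g ∈ H(β, L) satisfy |f(U) − g(U)| ≤ h^β for every point U ∈ P_ℓ^j and every j ∈ {0, …, m−1}^d, then sup_{x ∈ [0,1]^d} |f(x) − g(x)| ≤ c · h^β. -/

import Mathlib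

open MeasureTheory Finset
open scoped ENNReal

noncomputable section

/-- The largest integer strictly less than `β` (for `β > 0`). -/
def lflr (β : ℝ) : ℕ := ⌈β⌉₊ - 1

/-- The Euclidean (`ℓ²`) norm on `Fin d → ℝ`. -/
noncomputable def l2norm {d : ℕ} (x : Fin d → ℝ) : ℝ := Real.sqrt (∑ i, x i ^ 2)

/-- Partial derivative in coordinate `i`. -/
noncomputable def pder {d : ℕ} (i : Fin d) (f : (Fin d → ℝ) → ℝ) : (Fin d → ℝ) → ℝ :=
  fun x => fderiv ℝ f x (Pi.single i 1)

/-- The multi-index partial differential operator `D^s`. -/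
noncomputable def mderiv {d : ℕ} (s : Fin d → ℕ) (f : (Fin d → ℝ) → ℝ) : (Fin d → ℝ) → ℝ :=
  (List.finRange d).foldr (fun i g => (pder i)^[s i] g) f

/-- The Hölder class `H(β, L)`: functions supported on the unit cube, `⌊β⌋` times
differentiable, whose top-order partial derivatives are `(β - ⌊β⌋)`-Hölder with
constant `L` (w.r.t. the Euclidean norm). -/
def HolderClass (d : ℕ) (β L : ℝ) (f : (Fin d → ℝ) → ℝ) : Prop :=
  (∀ x, x ∉ Set.Icc (0 : Fin d → ℝ) 1 → f x = 0) ∧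
  ContDiff ℝ (lflr β : ℕ) f ∧
  ∀ s : Fin d → ℕ, (∑ i, s i) = lflr β → ∀ x y : Fin d → ℝ,
    |mderiv s f x - mderiv s f y| ≤ L * l2norm (x - y) ^ (β - (lflr β : ℝ))

/-- Barycentric coordinates with respect to the simplex `Δ_d` with vertices
`0, e_1, …, e_d`. -/
def lam {d : ℕ} (t : Fin (d + 1)) (x : Fin d → ℝ) : ℝ :=
  if h : t = 0 then 1 - ∑ i, x i else x (t.pred h)

/-- The `ℓ`-th principal lattice of the simplex `Δ_d`: points of the simplex all of
whose barycentric coordinates are nonnegative integer multiples of `1/ℓ`. -/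
def principalLattice (d ℓ : ℕ) : Set (Fin d → ℝ) :=
  {x | ∀ t : Fin (d + 1), 0 ≤ lam t x ∧ ∃ r : ℕ, (ℓ : ℝ) * lam t x = r}

/-- The Lagrange basis polynomial `p` associated with a point `u` of the `ℓ`-th
principal lattice:  `p(x) = ∏_{t : λ_t(u) > 0} ∏_{r=0}^{ℓλ_t(u)-1}
(λ_t(x) - r/ℓ)/(λ_t(u) - r/ℓ)`. -/
noncomputable def lagBasis (d ℓ : ℕ) (u x : Fin d → ℝ) : ℝ :=
  ∏ t : Fin (d + 1), ∏ r ∈ Finset.range ⌊(ℓ : ℝ) * lam t u⌋₊,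
    (lam t x - r / ℓ) / (lam t u - r / ℓ)

end

theorem newton1 (l s : ℕ) (hs : s ≤ l) (t : ℝ) :
    t ^ s = ∑ a ∈ Finset.range (l + 1), ((∏ r ∈ Finset.range a, (t - r)) / (a.factorial : ℝ)) *
      ((fwdDiff 1)^[a] (fun r : ℝ => r ^ s) 0) := by
  let P : Polynomial ℝ := Polynomial.X ^ s
  let Q : Polynomial ℝ := ∑ a ∈ Finset.range (l + 1),
    Polynomial.C ((((fwdDiff 1)^[a] (fun r : ℝ => r ^ s) 0)) / (a.factorial : ℝ)) *
      ∏ r ∈ Finset.range a, (Polynomial.X - Polynomial.C (r : ℝ))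
  have hPQ : P = Q := by
    apply Polynomial.eq_of_infinite_eval_eq
    apply Set.Infinite.mono (s := Set.range (fun n : ℕ => (n : ℝ)))
    · rintro _ ⟨n, rfl⟩
      have h := shift_eq_sum_fwdDiff_iter (1 : ℝ) (fun r : ℝ => r ^ s) n 0
      simp only [zero_add, nsmul_eq_mul, mul_one] at h
      simp only [Set.mem_ofPred_eq, P, Q, Polynomial.eval_pow, Polynomial.eval_X,
        Polynomial.eval_finsetSum, Polynomial.eval_mul, Polynomial.eval_C, Polynomial.eval_prod,
        Polynomial.eval_sub]
      rw [h]
      have e1 : ∀ N : ℕ, n ≤ N → ∑ k ∈ Finset.range (n + 1), (n.choose k : ℝ) *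
          (fwdDiff 1)^[k] (fun r : ℝ => r ^ s) 0 = ∑ k ∈ Finset.range (N + 1), (n.choose k : ℝ) *
          (fwdDiff 1)^[k] (fun r : ℝ => r ^ s) 0 := by
        intro N hN
        apply Finset.sum_subset
        · intro k hk
          simp only [Finset.mem_range] at *
          omega
        · intro k _ hk
          simp only [Finset.mem_range] at hk
          rw [Nat.choose_eq_zero_of_lt (by omega)]
          simp
      have e2 : ∀ N : ℕ, l ≤ N → ∑ k ∈ Finset.range (l + 1), (n.choose k : ℝ) *
          (fwdDiff 1)^[k] (fun r : ℝ => r ^ s) 0 = ∑ k ∈ Finset.range (N + 1), (n.choose k : ℝ) *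
          (fwdDiff 1)^[k] (fun r : ℝ => r ^ s) 0 := by
        intro N hN
        apply Finset.sum_subset
        · intro k hk
          simp only [Finset.mem_range] at *
          omega
        · intro k _ hk
          simp only [Finset.mem_range] at hk
          rw [fwdDiff_iter_pow_eq_zero_of_lt (by omega)]
          simp
      rw [e1 (max n l) (le_max_left _ _), ← e2 (max n l) (le_max_right _ _)]
      refine Finset.sum_congr rfl fun k _ => ?_
      have : ((∏ r ∈ Finset.range k, ((n : ℝ) - r)) : ℝ) = (n.choose k : ℝ) * k.factorial := by
        have h1 : ((n.descFactorial k : ℕ) : ℝ) = ∏ r ∈ Finset.range k, ((n : ℝ) - r) := by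
          rw [← descPochhammer_eval_eq_descFactorial, descPochhammer_eval_eq_prod_range]
        rw [← h1, Nat.descFactorial_eq_factorial_mul_choose]
        push_cast
        ring
      rw [this]
      have := Nat.factorial_ne_zero k
      field_simp
    · exact Set.infinite_range_of_injective Nat.cast_injective
  have h := congrArg (Polynomial.eval t) hPQ
  simp only [P, Q, Polynomial.eval_pow, Polynomial.eval_X,
        Polynomial.eval_finsetSum, Polynomial.eval_mul, Polynomial.eval_C, Polynomial.eval_prod,
        Polynomial.eval_sub] at h
  rw [h]
  refine Finset.sum_congr rfl fun k _ => ?_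
  ring

theorem newton1D (l a s : ℕ) (ha : a ≤ l) :
    (fwdDiff 1)^[a] (fun r : ℝ => r ^ s) 0 =
      ∑ k : Fin (l + 1), ((-1 : ℝ) ^ (a - (k : ℕ)) * (a.choose k : ℝ)) * (k : ℝ) ^ s := by
  rw [fwdDiff_iter_eq_sum_shift, Finset.sum_range, ← Finset.sum_range
    (fun k => ((-1 : ℤ) ^ (a - k) * (a.choose k : ℤ)) • (fun r : ℝ => r ^ s) (0 + k • (1:ℝ))),
    ← Finset.sum_range (fun k : ℕ => ((-1 : ℝ) ^ (a - (k : ℕ)) * (a.choose k : ℝ)) * (k : ℝ) ^ s)]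
  have : ∑ k ∈ Finset.range (a + 1), ((-1 : ℝ) ^ (a - (k : ℕ)) * (a.choose k : ℝ)) * (k : ℝ) ^ s =
     ∑ k ∈ Finset.range (l + 1), ((-1 : ℝ) ^ (a - (k : ℕ)) * (a.choose k : ℝ)) * (k : ℝ) ^ s := by
    apply Finset.sum_subset
    · intro k hk
      simp only [Finset.mem_range] at *
      omega
    · intro k _ hk
      simp only [Finset.mem_range] at hk
      rw [Nat.choose_eq_zero_of_lt (by omega)]
      simp
  rw [← this]
  refine Finset.sum_congr rfl fun k _ => ?_
  simp

/-- the weights -/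
noncomputable def wgt (d l : ℕ) (κ : Fin d → Fin (l + 1)) (z : Fin d → ℝ) : ℝ :=
  ∑ α ∈ (Finset.univ : Finset (Fin d → Fin (l + 1))).filter (fun α => ∑ i, (α i : ℕ) ≤ l),
    ∏ i, (((∏ r ∈ Finset.range (α i : ℕ), (z i - r)) / ((α i : ℕ).factorial : ℝ)) *
      ((-1 : ℝ) ^ ((α i : ℕ) - (κ i : ℕ)) * ((α i : ℕ).choose (κ i) : ℝ)))

theorem wgt_cont (d l : ℕ) (κ : Fin d → Fin (l + 1)) : Continuous (wgt d l κ) := by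
  unfold wgt
  fun_prop

theorem wgt_zero (d l : ℕ) (κ : Fin d → Fin (l + 1)) (z : Fin d → ℝ)
    (h : l < ∑ i, (κ i : ℕ)) : wgt d l κ z = 0 := by
  unfold wgt
  refine Finset.sum_eq_zero fun α hα => ?_
  simp only [Finset.mem_filter, Finset.mem_univ, true_and] at hα
  obtain ⟨i, _, hi⟩ := Finset.exists_lt_of_sum_lt (lt_of_le_of_lt hα h)
  refine Finset.prod_eq_zero (Finset.mem_univ i) ?_
  rw [Nat.choose_eq_zero_of_lt hi]
  simp

theorem wgt_repr (d l : ℕ) (s : Fin d → ℕ) (hs : ∑ i, s i ≤ l) (z : Fin d → ℝ) :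
    ∏ i, z i ^ s i = ∑ κ : Fin d → Fin (l + 1), wgt d l κ z * ∏ i, (κ i : ℝ) ^ s i := by
  have hsi : ∀ i, s i ≤ l := fun i =>
    (Finset.single_le_sum (f := s) (fun _ _ => Nat.zero_le _) (Finset.mem_univ i)).trans hs
  calc ∏ i, z i ^ s i = ∏ i, ∑ a : Fin (l + 1),
        ((∏ r ∈ Finset.range (a : ℕ), (z i - r)) / ((a : ℕ).factorial : ℝ)) *
          ((fwdDiff 1)^[(a : ℕ)] (fun r : ℝ => r ^ s i) 0) := by
        refine Finset.prod_congr rfl fun i _ => ?_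
        rw [newton1 l (s i) (hsi i), Finset.sum_range]
    _ = ∑ α : Fin d → Fin (l + 1), ∏ i,
        ((∏ r ∈ Finset.range (α i : ℕ), (z i - r)) / ((α i : ℕ).factorial : ℝ)) *
          ((fwdDiff 1)^[(α i : ℕ)] (fun r : ℝ => r ^ s i) 0) := by
        rw [Finset.prod_univ_sum]
        simp
    _ = ∑ α ∈ (Finset.univ : Finset (Fin d → Fin (l + 1))).filter
          (fun α => ∑ i, (α i : ℕ) ≤ l), ∏ i,
        ((∏ r ∈ Finset.range (α i : ℕ), (z i - r)) / ((α i : ℕ).factorial : ℝ)) *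
          ((fwdDiff 1)^[(α i : ℕ)] (fun r : ℝ => r ^ s i) 0) := by
        symm
        apply Finset.sum_subset (Finset.filter_subset _ _)
        intro α _ hα
        simp only [Finset.mem_filter, Finset.mem_univ, true_and, not_le] at hα
        obtain ⟨i, _, hi⟩ := Finset.exists_lt_of_sum_lt (lt_of_le_of_lt hs hα)
        refine Finset.prod_eq_zero (Finset.mem_univ i) ?_
        rw [fwdDiff_iter_pow_eq_zero_of_lt hi]
        simp
    _ = ∑ α ∈ (Finset.univ : Finset (Fin d → Fin (l + 1))).filter
          (fun α => ∑ i, (α i : ℕ) ≤ l), ∑ κ : Fin d → Fin (l + 1), (∏ i,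
        (((∏ r ∈ Finset.range (α i : ℕ), (z i - r)) / ((α i : ℕ).factorial : ℝ)) *
      ((-1 : ℝ) ^ ((α i : ℕ) - (κ i : ℕ)) * ((α i : ℕ).choose (κ i) : ℝ)))) *
         ∏ i, (κ i : ℝ) ^ s i := by
        refine Finset.sum_congr rfl fun α _ => ?_
        rw [Finset.prod_congr rfl (fun i _ => by
          rw [newton1D l (α i) (s i) (Nat.lt_succ_iff.mp (α i).2), Finset.mul_sum])]
        rw [Finset.prod_univ_sum]
        simp only [Fintype.piFinset_univ]
        refine Finset.sum_congr rfl fun κ _ => ?_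
        rw [← Finset.prod_mul_distrib]
        refine Finset.prod_congr rfl fun i _ => ?_
        ring
    _ = _ := by
        rw [Finset.sum_comm]
        refine Finset.sum_congr rfl fun κ _ => ?_
        rw [wgt, Finset.sum_mul]

theorem wgt_mult (d l k : ℕ) (hk : k ≤ l) (z : Fin d → ℝ)
    (A : MultilinearMap ℝ (fun _ : Fin k => (Fin d → ℝ)) ℝ) :
    A (fun _ => z) = ∑ κ : Fin d → Fin (l + 1), wgt d l κ z * A (fun _ => fun i => (κ i : ℝ)) := by
  have key : ∀ z : Fin d → ℝ, A (fun _ => z) = ∑ q : Fin k → Fin d,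
      (∏ i, z i ^ (Finset.univ.filter (fun j => q j = i)).card) *
        A (fun j => Pi.single (q j) 1) := by
    intro z
    have hz : z = ∑ i, z i • (Pi.single i 1 : Fin d → ℝ) := by
      simpa using (pi_eq_sum_univ' z)
    conv_lhs => rw [hz]
    rw [MultilinearMap.map_sum]
    refine Finset.sum_congr rfl fun q _ => ?_
    rw [MultilinearMap.map_smul_univ, smul_eq_mul]
    congr 1
    rw [← Finset.prod_fiberwise' Finset.univ q (fun i => z i)]
    simp
  rw [key z]
  simp_rw [key (fun i => _), Finset.mul_sum]
  rw [Finset.sum_comm]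
  refine Finset.sum_congr rfl fun q _ => ?_
  rw [wgt_repr d l]
  · rw [Finset.sum_mul]
    refine Finset.sum_congr rfl fun κ _ => ?_
    ring
  · have := Finset.card_eq_sum_card_fiberwise (s := (Finset.univ : Finset (Fin k))) (t := Finset.univ) (f := q) (by simp)
    rw [← this]
    simpa using hk

/-- iterated partial derivatives along a list -/
noncomputable def pders {d : ℕ} (l : List (Fin d)) (f : (Fin d → ℝ) → ℝ) : (Fin d → ℝ) → ℝ :=
  l.foldr pder f

theorem pder_contDiff {d : ℕ} (i : Fin d) (f : (Fin d → ℝ) → ℝ) (k : ℕ)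
    (hf : ContDiff ℝ (k + 1 : ℕ) f) : ContDiff ℝ k (pder i f) := by
  unfold pder
  have : ContDiff ℝ k (fderiv ℝ f) := hf.fderiv_right (by norm_cast)
  exact this.clm_apply contDiff_const

theorem pders_contDiff {d : ℕ} (l : List (Fin d)) (f : (Fin d → ℝ) → ℝ) (k : ℕ)
    (hf : ContDiff ℝ (k + l.length : ℕ) f) : ContDiff ℝ k (pders l f) := by
  induction l generalizing k with
  | nil => simpa [pders] using hf
  | cons a l ih =>
    apply pder_contDiff
    apply ih
    convert hf using 2
    simp
    ring

theorem pder_comm {d : ℕ} (i j : Fin d) (f : (Fin d → ℝ) → ℝ)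
    (hf : ContDiff ℝ 2 f) : pder i (pder j f) = pder j (pder i f) := by
  ext x
  have hs : IsSymmSndFDerivAt ℝ f x := hf.contDiffAt.isSymmSndFDerivAt (by simp)
  have hd : DifferentiableAt ℝ (fderiv ℝ f) x :=
    (hf.fderiv_right (m := 1) (by norm_num)).differentiable (by norm_num) x
  have e : ∀ i j : Fin d, pder i (pder j f) x =
      fderiv ℝ (fderiv ℝ f) x (Pi.single i 1) (Pi.single j 1) := by
    intro i j
    unfold pder
    rw [fderiv_clm_apply hd (by fun_prop)]
    simp
  rw [e, e]
  exact hs _ _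

theorem pders_perm {d : ℕ} (l l' : List (Fin d)) (h : l.Perm l') (f : (Fin d → ℝ) → ℝ)
    (hf : ContDiff ℝ l.length f) : pders l f = pders l' f := by
  induction h with
  | nil => rfl
  | cons a h ih =>
    have := ih (hf.of_le (by simp))
    simp only [pders, List.foldr_cons] at *
    rw [this]
  | swap a b l =>
    apply pder_comm
    apply pders_contDiff l f 2
    convert hf using 2
    simp
    ring
  | trans h1 h2 ih1 ih2 =>
    rw [ih1 hf, ih2 (by rw [← h1.length_eq]; exact hf)]

theorem pders_ofFn {d n : ℕ} (q : Fin n → Fin d) (f : (Fin d → ℝ) → ℝ)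
    (hf : ContDiff ℝ n f) (x : Fin d → ℝ) :
    pders (List.ofFn q) f x = iteratedFDeriv ℝ n f x (fun j => Pi.single (q j) 1) := by
  induction n generalizing x with
  | zero => simp [pders]
  | succ n ih =>
    have h1 : pders (List.ofFn (fun j : Fin n => q j.succ)) f =
      fun x => iteratedFDeriv ℝ n f x (fun j => Pi.single (q j.succ) 1) := by
      ext x
      exact ih _ (hf.of_le (by simp)) x
    rw [List.ofFn_succ]
    have : pders (q 0 :: List.ofFn (fun j : Fin n => q j.succ)) f =
      pder (q 0) (pders (List.ofFn (fun j : Fin n => q j.succ)) f) := rfl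
    rw [this, h1]
    have hd : DifferentiableAt ℝ (iteratedFDeriv ℝ n f) x := by
      apply hf.contDiffAt.differentiableAt_iteratedFDeriv
      norm_cast
      omega
    rw [iteratedFDeriv_succ_apply_left]
    unfold pder
    rw [fderiv_continuousMultilinear_apply_const_apply hd]
    rfl

theorem mderiv_eq_pders {d : ℕ} (s : Fin d → ℕ) (f : (Fin d → ℝ) → ℝ) :
    mderiv s f = pders ((List.finRange d).flatMap (fun i => List.replicate (s i) i)) f := by
  unfold mderiv pders
  generalize List.finRange d = l
  induction l with
  | nil => rfl
  | cons a l ih =>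
    rw [List.foldr_cons, ih, List.flatMap_cons, List.foldr_append]
    generalize List.foldr pder f (List.flatMap (fun i => List.replicate (s i) i) l) = g
    generalize s a = n
    induction n with
    | zero => rfl
    | succ n ih => rw [Function.iterate_succ_apply', ih, List.replicate_succ, List.foldr_cons]

theorem iter_eq_mderiv {d n : ℕ} (q : Fin n → Fin d) : ∃ s : Fin d → ℕ, ∑ i, s i = n ∧
    ∀ f : (Fin d → ℝ) → ℝ, ContDiff ℝ n f → ∀ x,
      iteratedFDeriv ℝ n f x (fun j => Pi.single (q j) 1) = mderiv s f x := by
  refine ⟨fun a => (List.ofFn q).count a, ?_, ?_⟩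
  · have := Multiset.toFinset_sum_count_eq (List.ofFn q : Multiset (Fin d))
    simp only [Multiset.coe_count, Multiset.coe_card, List.length_ofFn] at this
    conv_rhs => rw [← this]
    symm
    apply Finset.sum_subset (Finset.subset_univ _)
    intro i _ hi
    rw [List.count_eq_zero]
    simpa using hi
  · intro f hf x
    rw [← pders_ofFn q f hf, mderiv_eq_pders]
    refine congrFun (pders_perm _ _ ?_ f (by simpa using hf)) x
    rw [List.perm_iff_count]
    intro a
    rw [List.count_flatMap]
    simp only [Function.comp_def, List.count_replicate]
    rw [← List.ofFn_eq_map, List.sum_ofFn]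
    simp

theorem l2norm_le {d : ℕ} (v : Fin d → ℝ) (h : ℝ) (hh : 0 ≤ h) (hv : ∀ i, |v i| ≤ h) :
    l2norm v ≤ Real.sqrt d * h := by
  unfold l2norm
  rw [← Real.sqrt_sq hh, ← Real.sqrt_mul (by positivity)]
  apply Real.sqrt_le_sqrt
  calc ∑ i, v i ^ 2 ≤ ∑ i : Fin d, h ^ 2 := by
        refine Finset.sum_le_sum fun i _ => ?_
        rw [← sq_abs]
        exact pow_le_pow_left₀ (abs_nonneg _) (hv i) 2
    _ = _ := by simp

/-- Taylor expansion with Hölder remainder. -/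
theorem taylor_holder (d : ℕ) (β L : ℝ) (hβ : 1 < β) (hL : 0 < L) :
    ∃ C : ℝ, 0 ≤ C ∧ ∀ f, HolderClass d β L f → ∀ x : Fin d → ℝ,
      ∃ A : ∀ k : ℕ, MultilinearMap ℝ (fun _ : Fin k => (Fin d → ℝ)) ℝ,
        ∀ h : ℝ, 0 < h → ∀ v : Fin d → ℝ, (∀ i, |v i| ≤ h) →
          |f (x + v) - ∑ k ∈ Finset.range (lflr β + 1), A k (fun _ => v)| ≤ C * h ^ β := by
  have hl1 : 1 < ⌈β⌉₊ := by rw [Nat.lt_ceil]; simpa using hβ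
  obtain ⟨n, hn⟩ : ∃ n, lflr β = n + 1 := ⟨⌈β⌉₊ - 2, by unfold lflr; omega⟩
  have hex : 0 ≤ β - (lflr β : ℝ) := by
    have : lflr β < ⌈β⌉₊ := by unfold lflr; omega
    have := Nat.lt_ceil.1 this
    linarith
  set γ := β - (lflr β : ℝ) with hγ
  refine ⟨d ^ (n + 1) * (L * Real.sqrt d ^ γ), by positivity, ?_⟩
  intro f hf x
  have hcd : ContDiff ℝ ((n + 1 : ℕ)) f := hn ▸ hf.2.1
  let B : ∀ k : ℕ, MultilinearMap ℝ (fun _ : Fin k => (Fin d → ℝ)) ℝ :=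
    fun k => (iteratedFDeriv ℝ k f x).toMultilinearMap
  refine ⟨fun k => (if k = n + 1 then (n.factorial : ℝ)⁻¹ * ∫ t in (0:ℝ)..1, (1 - t) ^ n
    else (k.factorial : ℝ)⁻¹) • B k, ?_⟩
  intro h hh v hv
  have hT := map_add_eq_sum_add_integral_iteratedFDeriv (f := f) (x := x) (y := v) (n := n)
    (fun t _ => by exact_mod_cast hcd.contDiffAt)
  rw [hn, Finset.sum_range_succ]
  have e1 : ∑ k ∈ Finset.range (n + 1), ((if k = n + 1 then (n.factorial : ℝ)⁻¹ *
      ∫ t in (0:ℝ)..1, (1 - t) ^ n else (k.factorial : ℝ)⁻¹) • B k) (fun _ => v) =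
      ∑ k ∈ Finset.range (n + 1), (k.factorial : ℝ)⁻¹ • (iteratedFDeriv ℝ k f x (fun _ ↦ v)) := by
    refine Finset.sum_congr rfl fun k hk => ?_
    rw [if_neg (by have := Finset.mem_range.1 hk; omega)]
    rfl
  rw [e1]
  beta_reduce
  rw [if_pos rfl, hT]
  have hcont : Continuous (fun t : ℝ => iteratedFDeriv ℝ (n + 1) f (x + t • v) (fun _ => v)) := by
    have h1 : Continuous (iteratedFDeriv ℝ (n + 1) f) := hcd.continuous_iteratedFDeriv (by simp)
    have h2 : Continuous (fun t : ℝ => iteratedFDeriv ℝ (n + 1) f (x + t • v)) :=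
      h1.comp (by fun_prop)
    exact h2.eval_const _
  have e2 : ((n.factorial : ℝ)⁻¹ * ∫ t in (0:ℝ)..1, (1 - t) ^ n) * B (n + 1) (fun _ => v) =
      (n.factorial : ℝ)⁻¹ * ∫ t in (0:ℝ)..1, (1 - t) ^ n *
        iteratedFDeriv ℝ (n + 1) f x (fun _ => v) := by
    rw [intervalIntegral.integral_mul_const, mul_assoc]
    rfl
  rw [smul_apply, smul_eq_mul, smul_eq_mul, e2, add_sub_add_left_eq_sub, ← mul_sub,
    ← intervalIntegral.integral_sub]
  rotate_left
  · exact Continuous.intervalIntegrable (by fun_prop) _ _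
  · exact Continuous.intervalIntegrable (by fun_prop) _ _
  -- pointwise bound
  have hpt : ∀ t ∈ Set.Icc (0:ℝ) 1, |iteratedFDeriv ℝ (n + 1) f (x + t • v) (fun _ => v) -
      iteratedFDeriv ℝ (n + 1) f x (fun _ => v)| ≤ d ^ (n + 1) * (L * Real.sqrt d ^ γ) * h ^ β := by
    intro t ht
    have hz : v = ∑ i, v i • (Pi.single i 1 : Fin d → ℝ) := by
      simpa using (pi_eq_sum_univ' v)
    have ex : ∀ y, iteratedFDeriv ℝ (n + 1) f y (fun _ => v) = ∑ q : Fin (n + 1) → Fin d,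
        (∏ j, v (q j)) * iteratedFDeriv ℝ (n + 1) f y (fun j => Pi.single (q j) 1) := by
      intro y
      conv_lhs => rw [hz]
      rw [ContinuousMultilinearMap.map_sum]
      refine Finset.sum_congr rfl fun q _ => ?_
      rw [ContinuousMultilinearMap.map_smul_univ, smul_eq_mul]
    rw [ex, ex, ← Finset.sum_sub_distrib]
    have hq : ∀ q : Fin (n + 1) → Fin d, |(∏ j, v (q j)) * iteratedFDeriv ℝ (n + 1) f (x + t • v)
        (fun j => Pi.single (q j) 1) - (∏ j, v (q j)) * iteratedFDeriv ℝ (n + 1) f x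
        (fun j => Pi.single (q j) 1)| ≤ L * Real.sqrt d ^ γ * h ^ β := by
      intro q
      obtain ⟨s, hs, hs'⟩ := iter_eq_mderiv q
      rw [hs' f hcd, hs' f hcd, ← mul_sub, abs_mul, Finset.abs_prod]
      have hp : ∏ j, |v (q j)| ≤ h ^ (n + 1) := by
        calc ∏ j, |v (q j)| ≤ ∏ j : Fin (n + 1), h :=
              Finset.prod_le_prod (fun _ _ => abs_nonneg _) (fun j _ => hv (q j))
          _ = _ := by simp
      have hH := hf.2.2 s (hs.trans hn.symm) (x + t • v) x
      rw [add_sub_cancel_left] at hH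
      have hN : l2norm (t • v) ≤ Real.sqrt d * h := by
        apply l2norm_le _ _ hh.le
        intro i
        rw [Pi.smul_apply, smul_eq_mul, abs_mul, abs_of_nonneg ht.1]
        calc t * |v i| ≤ 1 * h := mul_le_mul ht.2 (hv i) (abs_nonneg _) zero_le_one
          _ = h := one_mul h
      have hH2 : |mderiv s f (x + t • v) - mderiv s f x| ≤ L * (Real.sqrt d * h) ^ γ := by
        refine hH.trans ?_
        gcongr
        exact Real.sqrt_nonneg _
      calc _ ≤ h ^ (n + 1) * (L * (Real.sqrt d * h) ^ γ) :=
            mul_le_mul hp hH2 (abs_nonneg _) (by positivity)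
        _ = L * Real.sqrt d ^ γ * (h ^ ((n + 1 : ℕ) : ℝ) * h ^ γ) := by
            rw [Real.mul_rpow (Real.sqrt_nonneg _) hh.le, Real.rpow_natCast]
            ring
        _ = L * Real.sqrt d ^ γ * h ^ β := by
            rw [← Real.rpow_add hh, hγ, hn]
            congr 2
            ring
    calc _ ≤ ∑ q : Fin (n + 1) → Fin d, L * Real.sqrt d ^ γ * h ^ β :=
          (Finset.abs_sum_le_sum_abs _ _).trans (Finset.sum_le_sum fun q _ => hq q)
      _ = _ := by
          simp
          ring
  have hint : |∫ t in (0:ℝ)..1, ((1 - t) ^ n • iteratedFDeriv ℝ (n + 1) f (x + t • v) (fun _ => v) -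
      (1 - t) ^ n * iteratedFDeriv ℝ (n + 1) f x (fun _ => v))| ≤
      d ^ (n + 1) * (L * Real.sqrt d ^ γ) * h ^ β := by
    have := intervalIntegral.norm_integral_le_of_norm_le_const (a := (0:ℝ)) (b := 1)
      (C := d ^ (n + 1) * (L * Real.sqrt d ^ γ) * h ^ β)
      (f := fun t => ((1 - t) ^ n • iteratedFDeriv ℝ (n + 1) f (x + t • v) (fun _ => v) -
      (1 - t) ^ n * iteratedFDeriv ℝ (n + 1) f x (fun _ => v))) ?_
    · simpa using this
    · intro t ht
      rw [Set.uIoc_of_le zero_le_one] at ht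
      rw [Real.norm_eq_abs, smul_eq_mul, ← mul_sub, abs_mul]
      have h1 : |(1 - t) ^ n| ≤ 1 := by
        rw [abs_pow]
        apply pow_le_one₀ (abs_nonneg _)
        rw [abs_le]
        constructor <;> linarith [ht.1, ht.2]
      calc _ ≤ 1 * (d ^ (n + 1) * (L * Real.sqrt d ^ γ) * h ^ β) :=
            mul_le_mul h1 (hpt t ⟨ht.1.le, ht.2⟩) (abs_nonneg _) zero_le_one
        _ = _ := one_mul _
  rw [abs_mul]
  have hfac : |((n.factorial : ℝ)⁻¹)| ≤ 1 := by
    rw [abs_of_nonneg (by positivity)]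
    apply inv_le_one_of_one_le₀
    exact_mod_cast Nat.one_le_iff_ne_zero.2 (Nat.factorial_ne_zero n)
  calc _ ≤ 1 * (d ^ (n + 1) * (L * Real.sqrt d ^ γ) * h ^ β) :=
        mul_le_mul hfac hint (abs_nonneg _) zero_le_one
    _ = _ := one_mul _

theorem wgt_bound (d l : ℕ) : ∃ W : ℝ, 0 ≤ W ∧ ∀ z ∈ Set.Icc (0 : Fin d → ℝ) (fun _ => (l : ℝ)),
    ∑ κ, |wgt d l κ z| ≤ W := by
  have hc : Continuous (fun z => ∑ κ, |wgt d l κ z|) :=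
    continuous_finsetSum _ fun κ _ => (wgt_cont d l κ).abs
  obtain ⟨W, hW⟩ := (isCompact_Icc (a := (0 : Fin d → ℝ))
    (b := fun _ => (l : ℝ))).exists_bound_of_continuousOn hc.continuousOn
  refine ⟨max W 0, le_max_right _ _, fun z hz => le_max_of_le_left ?_⟩
  exact (le_abs_self _).trans (hW z hz)

theorem lattice_mem (d l : ℕ) (hl : 0 < l) (κ : Fin d → Fin (l + 1)) (h : ∑ i, (κ i : ℕ) ≤ l) :
    (fun i => (κ i : ℝ) / l) ∈ principalLattice d l := by
  have hl' : (0 : ℝ) < l := by exact_mod_cast hl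
  intro t
  unfold lam
  split_ifs with ht
  · have e : (1 : ℝ) - ∑ i, (κ i : ℝ) / l = ((l - ∑ i, (κ i : ℕ) : ℕ) : ℝ) / l := by
      rw [Nat.cast_sub h, ← Finset.sum_div]
      push_cast
      field_simp
    rw [e]
    refine ⟨by positivity, _, mul_div_cancel₀ _ hl'.ne'⟩
  · exact ⟨by positivity, _, mul_div_cancel₀ _ hl'.ne'⟩

/-- If two functions in `H(β, L)` are `h^β`-close at every point of
every rescaled-and-shifted copy `P_ℓ^j = h(P_ℓ + j)` of the `ℓ`-th principal lattice
(for the partition of `[0,1]^d` into sub-cubes of side `h = 1/m`), then they are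
`c h^β`-close uniformly on the unit cube, for a constant `c = c(β, d, L)`. -/
theorem stmt16 (d : ℕ) (hd : 1 ≤ d) (β L : ℝ) (hβ : 1 < β) (hL : 0 < L)
    (ℓ : ℕ) (hℓ : ℓ = lflr β) :
    ∃ c : ℝ, 0 < c ∧ ∀ m : ℕ, 0 < m → ∀ h : ℝ, h = 1 / (m : ℝ) →
      ∀ f g : (Fin d → ℝ) → ℝ, HolderClass d β L f → HolderClass d β L g →
        (∀ j : Fin d → ℕ, (∀ i, j i < m) → ∀ x ∈ principalLattice d ℓ,
          |f (fun i => h * (x i + (j i : ℝ))) - g (fun i => h * (x i + (j i : ℝ)))|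
            ≤ h ^ β) →
        ∀ y ∈ Set.Icc (0 : Fin d → ℝ) 1, |f y - g y| ≤ c * h ^ β := by
  have hl1 : 1 < ⌈β⌉₊ := by rw [Nat.lt_ceil]; simpa using hβ
  have hlpos : 0 < ℓ := by rw [hℓ]; unfold lflr; omega
  have hl' : (0 : ℝ) < ℓ := by exact_mod_cast hlpos
  obtain ⟨C, hC, hT⟩ := taylor_holder d β L hβ hL
  obtain ⟨W, hW, hWb⟩ := wgt_bound d ℓ
  refine ⟨2 * C + W * (1 + 2 * C) + 1, by positivity, ?_⟩
  intro m hm h hh f g hf hg hfg y hy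
  have hm' : (0 : ℝ) < m := by exact_mod_cast hm
  have hhpos : 0 < h := by rw [hh]; positivity
  have hmh : (m : ℝ) * h = 1 := by rw [hh]; field_simp
  have hpow : 0 < h ^ β := Real.rpow_pos_of_pos hhpos β
  -- choice of the sub-cube
  have hj : ∀ i, ∃ j : ℕ, j < m ∧ (j : ℝ) ≤ m * y i ∧ m * y i ≤ j + 1 := by
    intro i
    have h0 : 0 ≤ y i := hy.1 i
    have h1 : y i ≤ 1 := hy.2 i
    rcases lt_or_eq_of_le h1 with h1 | h1
    · refine ⟨⌊m * y i⌋₊, ?_, Nat.floor_le (by positivity), (Nat.lt_floor_add_one _).le⟩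
      rw [Nat.floor_lt (by positivity)]
      nlinarith
    · refine ⟨m - 1, by omega, ?_, ?_⟩
      · rw [h1, mul_one]
        exact_mod_cast Nat.sub_le m 1
      · rw [h1, mul_one, Nat.cast_sub hm]
        simp
  choose j hjm hjl hju using hj
  let x : Fin d → ℝ := fun i => h * (j i : ℝ)
  let v : Fin d → ℝ := fun i => y i - h * (j i : ℝ)
  let z : Fin d → ℝ := fun i => ℓ * (m * y i - j i)
  have hz : z ∈ Set.Icc (0 : Fin d → ℝ) (fun _ => (ℓ : ℝ)) := by
    constructor
    · intro i
      have := hjl i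
      exact mul_nonneg hl'.le (by linarith)
    · intro i
      have := hju i
      show (ℓ : ℝ) * (m * y i - j i) ≤ ℓ
      nlinarith
  have hvz : v = (h / ℓ) • z := by
    ext i
    show y i - h * (j i : ℝ) = h / ℓ * (ℓ * (m * y i - j i))
    have : h / ℓ * (ℓ * (m * y i - j i)) = (m * h) * y i - h * j i := by
      field_simp
    rw [this, hmh, one_mul]
  have hxv : x + v = y := by
    ext i
    show h * (j i : ℝ) + (y i - h * (j i : ℝ)) = y i
    ring
  have hbd : ∀ u ∈ Set.Icc (0 : Fin d → ℝ) (fun _ => (ℓ : ℝ)), ∀ i, |((h / ℓ) • u) i| ≤ h := by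
    intro u hu i
    have h0 : 0 ≤ u i := hu.1 i
    have h1 : u i ≤ ℓ := hu.2 i
    rw [Pi.smul_apply, smul_eq_mul, abs_of_nonneg (by positivity), div_mul_eq_mul_div,
      div_le_iff₀ hl']
    exact mul_le_mul_of_nonneg_left h1 hhpos.le
  let pt : (Fin d → Fin (ℓ + 1)) → Fin d → ℝ := fun κ i => (κ i : ℝ)
  have hpt : ∀ κ, pt κ ∈ Set.Icc (0 : Fin d → ℝ) (fun _ => (ℓ : ℝ)) := by
    intro κ
    constructor
    · intro i
      exact Nat.cast_nonneg _
    · intro i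
      show ((κ i : ℕ) : ℝ) ≤ (ℓ : ℝ)
      exact_mod_cast Nat.lt_succ_iff.1 (κ i).2
  -- reproduction
  have hrep : ∀ A : ∀ k : ℕ, MultilinearMap ℝ (fun _ : Fin k => (Fin d → ℝ)) ℝ,
      ∑ k ∈ Finset.range (ℓ + 1), A k (fun _ => (h / ℓ) • z) =
      ∑ κ, wgt d ℓ κ z * ∑ k ∈ Finset.range (ℓ + 1), A k (fun _ => (h / ℓ) • pt κ) := by
    intro A
    simp_rw [Finset.mul_sum]
    rw [Finset.sum_comm]
    refine Finset.sum_congr rfl fun k hk => ?_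
    have hk' : k ≤ ℓ := Nat.lt_succ_iff.1 (Finset.mem_range.1 hk)
    have e : ∀ u : Fin d → ℝ, A k (fun _ => (h / ℓ) • u) = (h / ℓ) ^ k * A k (fun _ => u) := by
      intro u
      rw [MultilinearMap.map_smul_univ (A k) (fun _ => h / (ℓ : ℝ)) (fun _ => u)]
      rw [Finset.prod_const, Finset.card_univ, Fintype.card_fin, smul_eq_mul]
    simp_rw [e]
    rw [wgt_mult d ℓ k hk' z (A k), Finset.mul_sum]
    refine Finset.sum_congr rfl fun κ _ => ?_
    show _ = wgt d ℓ κ z * ((h / ℓ) ^ k * A k (fun _ => fun i => (κ i : ℝ)))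
    ring
  obtain ⟨A, hA⟩ := hT f hf x
  obtain ⟨B, hB⟩ := hT g hg x
  rw [← hℓ] at hA hB
  set P : (Fin d → ℝ) → ℝ := fun u => ∑ k ∈ Finset.range (ℓ + 1), A k (fun _ => u) with hP
  set Q : (Fin d → ℝ) → ℝ := fun u => ∑ k ∈ Finset.range (ℓ + 1), B k (fun _ => u) with hQ
  have hterm : ∀ κ, |wgt d ℓ κ z * (P ((h / ℓ) • pt κ) - Q ((h / ℓ) • pt κ))| ≤
      |wgt d ℓ κ z| * ((1 + 2 * C) * h ^ β) := by
    intro κ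
    by_cases hκ : ∑ i, (κ i : ℕ) ≤ ℓ
    · rw [abs_mul]
      refine mul_le_mul_of_nonneg_left ?_ (abs_nonneg _)
      have h1 := hA h hhpos ((h / ℓ) • pt κ) (hbd _ (hpt κ))
      have h2 := hB h hhpos ((h / ℓ) • pt κ) (hbd _ (hpt κ))
      have h3 := hfg j hjm _ (lattice_mem d ℓ hlpos κ hκ)
      have e : (fun i => h * ((κ i : ℝ) / ℓ + (j i : ℝ))) = x + (h / ℓ) • pt κ := by
        ext i
        show h * ((κ i : ℝ) / ℓ + (j i : ℝ)) = h * (j i : ℝ) + h / ℓ * (κ i : ℝ)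
        ring
      rw [e] at h3
      change |f (x + (h / ℓ) • pt κ) - P ((h / ℓ) • pt κ)| ≤ _ at h1
      change |g (x + (h / ℓ) • pt κ) - Q ((h / ℓ) • pt κ)| ≤ _ at h2
      rw [abs_le] at *
      constructor <;> linarith [h1.1, h1.2, h2.1, h2.2, h3.1, h3.2]
    · rw [wgt_zero d ℓ κ z (not_le.1 hκ)]
      simp
  have hPQ : |P v - Q v| ≤ W * ((1 + 2 * C) * h ^ β) := by
    have e : P v - Q v =
        ∑ κ, wgt d ℓ κ z * (P ((h / ℓ) • pt κ) - Q ((h / ℓ) • pt κ)) := by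
      rw [hvz]
      have e1 : P ((h / ℓ) • z) = ∑ κ, wgt d ℓ κ z * P ((h / ℓ) • pt κ) := hrep A
      have e2 : Q ((h / ℓ) • z) = ∑ κ, wgt d ℓ κ z * Q ((h / ℓ) • pt κ) := hrep B
      rw [e1, e2, ← Finset.sum_sub_distrib]
      refine Finset.sum_congr rfl fun κ _ => ?_
      ring
    rw [e]
    calc _ ≤ ∑ κ, |wgt d ℓ κ z| * ((1 + 2 * C) * h ^ β) :=
          (Finset.abs_sum_le_sum_abs _ _).trans (Finset.sum_le_sum fun κ _ => hterm κ)
      _ = (∑ κ, |wgt d ℓ κ z|) * ((1 + 2 * C) * h ^ β) := by rw [Finset.sum_mul]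
      _ ≤ _ := mul_le_mul_of_nonneg_right (hWb z hz) (by positivity)
  have h1 := hA h hhpos v (by rw [hvz]; exact hbd z hz)
  have h2 := hB h hhpos v (by rw [hvz]; exact hbd z hz)
  change |f (x + v) - P v| ≤ _ at h1
  change |g (x + v) - Q v| ≤ _ at h2
  rw [hxv] at h1 h2
  rw [abs_le] at *
  constructor <;> nlinarith [h1.1, h1.2, h2.1, h2.2, hPQ.1, hPQ.2]
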